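/- Pointwise (per-step) loss bound: for all real A > 0 and B ≥ A/4 + 1/A, every t ≥ 1, and every history x_{<t} with μ(x_{<t}) > 0 and ξ(x_{<t}) > 0, the instantaneous losses satisfy l_{tΛξ}(x_{<t}) ≤ (A+1) l_{tΛμ}(x_{<t}) + (B+1) h_t(x_{<t}). -/

import Mathlib

open Finset Filter

/-- A probability distribution on finite binary strings:
nonnegative, `1` on the empty string, and additive under one-symbol extension. -/
def IsDistr (ρ : List Bool → ℝ) : Prop :=
  (∀ x, 0 ≤ ρ x) ∧ ρ [] = 1 ∧
    ∀ x, ρ x = ρ (x ++ [false]) + ρ (x ++ [true])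

/-- Conditional probability `ρ(b | x) = ρ(xb)/ρ(x)` (junk `0` when `ρ x = 0`). -/
noncomputable def condP (ρ : List Bool → ℝ) (x : List Bool) (b : Bool) : ℝ :=
  ρ (x ++ [b]) / ρ x

/-- Instantaneous relative entropy
`h_t(x) = ∑_b μ(b|x) ln (μ(b|x)/ξ(b|x))` (conventions `0·ln 0 = 0` are automatic
since `Real.log 0 = 0` and `r/0 = 0`). -/
noncomputable def instEnt (μ ξ : List Bool → ℝ) (x : List Bool) : ℝ :=
  ∑ b : Bool, condP μ x b * Real.log (condP μ x b / condP ξ x b)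

/-- Total relative entropy `H_n = ∑_{t=1}^n ∑_{x_{<t}} μ(x_{<t}) h_t(x_{<t})`
(histories of length `t-1`, i.e. length `t ∈ {0,…,n-1}`). -/
noncomputable def totalEnt (μ ξ : List Bool → ℝ) (n : ℕ) : ℝ :=
  ∑ t ∈ Finset.range n, ∑ x : Fin t → Bool,
    μ (List.ofFn x) * instEnt μ ξ (List.ofFn x)

/-- `ρ`-expected loss of predicting `y` after history `x`. -/
noncomputable def expLoss (ρ : List Bool → ℝ) (l : Bool → Bool → ℝ)
    (x : List Bool) (y : Bool) : ℝ :=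
  ∑ b : Bool, condP ρ x b * l b y

/-- `Y` is a fixed choice of minimizers for the scheme `Λ_ρ`. -/
def IsPredictor (ρ : List Bool → ℝ) (l : Bool → Bool → ℝ)
    (Y : List Bool → Bool) : Prop :=
  ∀ x y, expLoss ρ l x (Y x) ≤ expLoss ρ l x y

/-- Total `μ`-expected loss `L_{nΛ}` of the scheme with minimizers `Y`. -/
noncomputable def totalLoss (μ : List Bool → ℝ) (l : Bool → Bool → ℝ)
    (Y : List Bool → Bool) (n : ℕ) : ℝ :=
  ∑ t ∈ Finset.range n, ∑ x : Fin t → Bool,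
    μ (List.ofFn x) * expLoss μ l (List.ofFn x) (Y (List.ofFn x))

/-! By the Gibbs variational inequality, `∑ p f ≤ KL(p ‖ q)` as soon as `∑ q exp f ≤ ∑ p`. Apply it
with `p`, `q` the next-symbol probabilities under `μ`, `ξ` and `f = s (ℓ - (A + 1) ℓ')`, where `ℓ`,
`ℓ'` are the losses of the predictions of `Λ_ξ`, `Λ_μ` and `s = 1 / (A / 4 + 1 / A + 1)`. Bounding
each exponential by its chord on `[0, 1]` gives `exp f ≤ 1 + (exp s - 1) (ℓ - ℓ')`, provided that
`exp s + exp (-(A + 1) s) ≤ 2`; the `q`-mean of the right-hand side is at most `1` because the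
prediction of `Λ_ξ` is `ξ`-optimal. The condition on `s` reduces to `cosh x ≤ exp (x² / 2)`. -/

section Exponential

lemma exp_mul_le_one_add_mul (s : ℝ) {a : ℝ} (ha : a ∈ Set.Icc (0 : ℝ) 1) :
    Real.exp (s * a) ≤ 1 + a * (Real.exp s - 1) := by
  have chord := convexOn_exp.2 (Set.mem_univ s) (Set.mem_univ 0) ha.1 (sub_nonneg.2 ha.2)
    (add_sub_cancel a 1)
  simp only [smul_eq_mul, mul_zero, add_zero, Real.exp_zero, mul_one] at chord
  rw [mul_comm s a]
  linarith

lemma exp_sub_half_sq_add_exp_neg_sub_half_sq_le_two (x : ℝ) :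
    Real.exp (x - x ^ 2 / 2) + Real.exp (-x - x ^ 2 / 2) ≤ 2 := by
  rw [Real.exp_sub, Real.exp_sub, ← add_div, div_le_iff₀ (Real.exp_pos _)]
  have hcosh := Real.cosh_le_exp_half_sq x
  rw [Real.cosh_eq] at hcosh
  linarith

lemma exp_rate_add_exp_neg_mul_rate_le_two {A : ℝ} (hA : 0 < A) :
    Real.exp (A / 4 + 1 / A + 1)⁻¹ + Real.exp (-((A + 1) * (A / 4 + 1 / A + 1)⁻¹)) ≤ 2 := by
  set x := 2 * A / (A + 2) with hx
  have hrate : (A / 4 + 1 / A + 1)⁻¹ = 4 * A / (A + 2) ^ 2 := by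
    rw [inv_eq_iff_eq_inv, inv_div]
    field_simp
    ring
  have hpos : (A / 4 + 1 / A + 1)⁻¹ = x - x ^ 2 / 2 := by
    rw [hrate, hx]
    field_simp
    ring
  have hneg : -((A + 1) * (A / 4 + 1 / A + 1)⁻¹) = -x - x ^ 2 / 2 := by
    rw [hrate, hx]
    field_simp
    ring
  rw [hneg, hpos]
  exact exp_sub_half_sq_add_exp_neg_sub_half_sq_le_two x

lemma exp_mul_sub_mul_le {s r a c : ℝ} (hs : 0 ≤ s) (hsr : Real.exp s + Real.exp (-r) ≤ 2)
    (ha : a ∈ Set.Icc (0 : ℝ) 1) (hc : c ∈ Set.Icc (0 : ℝ) 1) :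
    Real.exp (s * a - r * c) ≤ 1 + (Real.exp s - 1) * (a - c) := by
  have hk : 0 ≤ Real.exp s - 1 := sub_nonneg.2 (Real.one_le_exp hs)
  have hc_chord : Real.exp (-r * c) ≤ 1 - c * (Real.exp s - 1) := by
    have := mul_le_mul_of_nonneg_left hsr hc.1
    linarith [exp_mul_le_one_add_mul (-r) hc]
  have hcross : 0 ≤ a * c * (Real.exp s - 1) ^ 2 :=
    mul_nonneg (mul_nonneg ha.1 hc.1) (sq_nonneg _)
  calc Real.exp (s * a - r * c)
      = Real.exp (s * a) * Real.exp (-r * c) := by rw [← Real.exp_add]; ring_nf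
    _ ≤ (1 + a * (Real.exp s - 1)) * (1 - c * (Real.exp s - 1)) :=
        mul_le_mul (exp_mul_le_one_add_mul s ha) hc_chord (Real.exp_pos _).le
          (add_nonneg zero_le_one (mul_nonneg ha.1 hk))
    _ ≤ 1 + (Real.exp s - 1) * (a - c) := by linarith

end Exponential

section RelativeEntropy

variable {α : Type*} [Fintype α] {p q : α → ℝ}

/-- The relative entropy (Kullback–Leibler divergence) of two weight vectors on a finite type.
A term with `p a = 0` vanishes; a term with `q a = 0` also does, instead of being infinite, so it is
meaningful only when `q a = 0` implies `p a = 0`. -/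
noncomputable def relEntropy (p q : α → ℝ) : ℝ :=
  ∑ a, p a * Real.log (p a / q a)

lemma mul_le_mul_log_div_add {x y : ℝ} (hx : 0 ≤ x) (hy : 0 ≤ y) (hyx : y = 0 → x = 0) (u : ℝ) :
    x * u ≤ x * Real.log (x / y) + (y * Real.exp u - x) := by
  rcases hx.eq_or_lt with rfl | hx
  · simpa using mul_nonneg hy (Real.exp_pos u).le
  have hy : 0 < y := hy.lt_of_ne' (mt hyx hx.ne')
  have hexp : Real.exp (u - Real.log (x / y)) = y * Real.exp u / x := by
    rw [Real.exp_sub, Real.exp_log (div_pos hx hy)]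
    field_simp
  have htangent : x * (u - Real.log (x / y) + 1) ≤ y * Real.exp u := by
    rw [mul_comm, ← le_div_iff₀ hx, ← hexp]
    exact Real.add_one_le_exp _
  linarith

lemma sum_mul_le_relEntropy (hp : 0 ≤ p) (hq : 0 ≤ q) (hac : ∀ a, q a = 0 → p a = 0) {f : α → ℝ}
    (hf : ∑ a, q a * Real.exp (f a) ≤ ∑ a, p a) :
    ∑ a, p a * f a ≤ relEntropy p q :=
  calc ∑ a, p a * f a
      ≤ ∑ a, (p a * Real.log (p a / q a) + (q a * Real.exp (f a) - p a)) :=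
        sum_le_sum fun a _ => mul_le_mul_log_div_add (hp a) (hq a) (hac a) (f a)
    _ = relEntropy p q + (∑ a, q a * Real.exp (f a) - ∑ a, p a) := by
        rw [sum_add_distrib, sum_sub_distrib, relEntropy]
    _ ≤ relEntropy p q := by linarith

lemma relEntropy_nonneg (hp : 0 ≤ p) (hq : 0 ≤ q) (hac : ∀ a, q a = 0 → p a = 0)
    (hqp : ∑ a, q a ≤ ∑ a, p a) : 0 ≤ relEntropy p q := by
  simpa using sum_mul_le_relEntropy hp hq hac (f := 0) (by simpa using hqp)

variable {ℓ ℓ' : α → ℝ}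

lemma mul_sum_le_mul_sum_add_relEntropy (hp : 0 ≤ p) (hq : 0 ≤ q)
    (hac : ∀ a, q a = 0 → p a = 0) (hqp : ∑ a, q a ≤ ∑ a, p a)
    (hℓ : ∀ a, ℓ a ∈ Set.Icc (0 : ℝ) 1) (hℓ' : ∀ a, ℓ' a ∈ Set.Icc (0 : ℝ) 1)
    (hle : ∑ a, q a * ℓ a ≤ ∑ a, q a * ℓ' a) {s r : ℝ} (hs : 0 ≤ s)
    (hsr : Real.exp s + Real.exp (-r) ≤ 2) :
    s * ∑ a, p a * ℓ a ≤ r * ∑ a, p a * ℓ' a + relEntropy p q := by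
  have hmgf : ∑ a, q a * Real.exp (s * ℓ a - r * ℓ' a) ≤ ∑ a, p a :=
    calc ∑ a, q a * Real.exp (s * ℓ a - r * ℓ' a)
        ≤ ∑ a, q a * (1 + (Real.exp s - 1) * (ℓ a - ℓ' a)) :=
          sum_le_sum fun a _ =>
            mul_le_mul_of_nonneg_left (exp_mul_sub_mul_le hs hsr (hℓ a) (hℓ' a)) (hq a)
      _ = ∑ a, q a + (Real.exp s - 1) * (∑ a, q a * ℓ a - ∑ a, q a * ℓ' a) := by
          rw [← sum_sub_distrib, mul_sum, ← sum_add_distrib]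
          exact sum_congr rfl fun a _ => by ring
      _ ≤ ∑ a, q a := add_le_of_nonpos_right <|
          mul_nonpos_of_nonneg_of_nonpos (sub_nonneg.2 (Real.one_le_exp hs)) (sub_nonpos.2 hle)
      _ ≤ ∑ a, p a := hqp
  have hexpand : ∑ a, p a * (s * ℓ a - r * ℓ' a) =
      s * ∑ a, p a * ℓ a - r * ∑ a, p a * ℓ' a := by
    rw [mul_sum, mul_sum, ← sum_sub_distrib]
    exact sum_congr rfl fun a _ => by ring
  linarith [sum_mul_le_relEntropy hp hq hac hmgf]

lemma sum_mul_le_mul_sum_add_mul_relEntropy (hp : 0 ≤ p) (hq : 0 ≤ q)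
    (hac : ∀ a, q a = 0 → p a = 0) (hqp : ∑ a, q a ≤ ∑ a, p a)
    (hℓ : ∀ a, ℓ a ∈ Set.Icc (0 : ℝ) 1) (hℓ' : ∀ a, ℓ' a ∈ Set.Icc (0 : ℝ) 1)
    (hle : ∑ a, q a * ℓ a ≤ ∑ a, q a * ℓ' a) {A B : ℝ} (hA : 0 < A) (hB : A / 4 + 1 / A ≤ B) :
    ∑ a, p a * ℓ a ≤ (A + 1) * ∑ a, p a * ℓ' a + (B + 1) * relEntropy p q := by
  set C := A / 4 + 1 / A + 1 with hC
  have hC_pos : 0 < C := by positivity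
  have hscaled : C⁻¹ * ∑ a, p a * ℓ a ≤
      (A + 1) * C⁻¹ * ∑ a, p a * ℓ' a + relEntropy p q :=
    mul_sum_le_mul_sum_add_relEntropy hp hq hac hqp hℓ hℓ' hle (inv_pos.2 hC_pos).le
      (exp_rate_add_exp_neg_mul_rate_le_two hA)
  calc ∑ a, p a * ℓ a
      = C * (C⁻¹ * ∑ a, p a * ℓ a) := (mul_inv_cancel_left₀ hC_pos.ne' _).symm
    _ ≤ C * ((A + 1) * C⁻¹ * ∑ a, p a * ℓ' a + relEntropy p q) :=
        mul_le_mul_of_nonneg_left hscaled hC_pos.le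
    _ = (A + 1) * ∑ a, p a * ℓ' a + C * relEntropy p q := by
        field_simp
    _ ≤ (A + 1) * ∑ a, p a * ℓ' a + (B + 1) * relEntropy p q := by
        gcongr
        · exact relEntropy_nonneg hp hq hac hqp
        · linarith

end RelativeEntropy

section Prediction

variable {μ ξ : List Bool → ℝ}

lemma condP_mem_stdSimplex (hμ : IsDistr μ) {x : List Bool} (hx : μ x ≠ 0) :
    condP μ x ∈ stdSimplex ℝ Bool := by
  refine ⟨fun b => div_nonneg (hμ.1 _) (hμ.1 _), ?_⟩
  rw [Fintype.sum_bool, condP, condP, ← add_div, add_comm, ← hμ.2.2, div_self hx]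

lemma IsDistr.eq_zero_of_append_eq_zero (hμ : IsDistr μ) {x : List Bool}
    (h : ∀ b, μ (x ++ [b]) = 0) : μ x = 0 := by
  rw [hμ.2.2, h, h, add_zero]

lemma IsDistr.append_eq_zero (hμ : IsDistr μ) {x : List Bool} (hx : μ x = 0) (b : Bool) :
    μ (x ++ [b]) = 0 := by
  have hsum := hμ.2.2 x
  have hfalse := hμ.1 (x ++ [false])
  have htrue := hμ.1 (x ++ [true])
  cases b <;> linarith

theorem pointwise_loss_bound_general (hμ : IsDistr μ) (hξ : IsDistr ξ) {x : List Bool}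
    (hac : ∀ b, ξ (x ++ [b]) = 0 → μ (x ++ [b]) = 0) (hμx : 0 < μ x)
    {l : Bool → Bool → ℝ} (hl : ∀ a y, l a y ∈ Set.Icc (0 : ℝ) 1) {y y' : Bool}
    (hy : expLoss ξ l x y ≤ expLoss ξ l x y') {A B : ℝ} (hA : 0 < A) (hB : A / 4 + 1 / A ≤ B) :
    expLoss μ l x y ≤ (A + 1) * expLoss μ l x y' + (B + 1) * instEnt μ ξ x := by
  have hξx : ξ x ≠ 0 := fun h =>
    hμx.ne' (hμ.eq_zero_of_append_eq_zero fun b => hac b (hξ.append_eq_zero h b))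
  have hp := condP_mem_stdSimplex hμ hμx.ne'
  have hq := condP_mem_stdSimplex hξ hξx
  have hcond : ∀ b, condP ξ x b = 0 → condP μ x b = 0 := fun b h =>
    div_eq_zero_iff.2 (.inl (hac b ((div_eq_zero_iff.1 h).resolve_right hξx)))
  exact sum_mul_le_mul_sum_add_mul_relEntropy hp.1 hq.1 hcond (hq.2.trans hp.2.symm).le
    (fun b => hl b y) (fun b => hl b y') hy hA hB

end Prediction

section Mixture

variable {ι : Type*} {μs : ι → List Bool → ℝ} {w : ι → ℝ}

lemma IsDistr.of_hasSum {ξ : List Bool → ℝ} (hμs : ∀ i, IsDistr (μs i)) (hw : ∀ i, 0 ≤ w i)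
    (hw1 : HasSum w 1) (hξ : ∀ x, HasSum (fun i => w i * μs i x) (ξ x)) : IsDistr ξ := by
  refine ⟨fun x => (hξ x).nonneg fun i => mul_nonneg (hw i) ((hμs i).1 x), ?_, fun x => ?_⟩
  · refine (hξ []).unique ?_
    simpa only [(hμs _).2.1, mul_one] using hw1
  · refine (hξ x).unique ?_
    simpa only [← mul_add, ← (hμs _).2.2] using (hξ (x ++ [false])).add (hξ (x ++ [true]))

lemma eq_zero_of_hasSum_mul_zero {f : ι → ℝ} (hf : ∀ i, 0 ≤ f i) (hw : ∀ i, 0 < w i)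
    (h : HasSum (fun i => w i * f i) 0) (i : ι) : f i = 0 := by
  have hterms : (fun i => w i * f i) = 0 :=
    (hasSum_zero_iff_of_nonneg fun i => mul_nonneg (hw i).le (hf i)).1 h
  exact (mul_eq_zero.1 (congrFun hterms i)).resolve_left (hw i).ne'

end Mixture

/-- pointwise loss bound, eq. (10): for all `A > 0`,
`B ≥ A/4 + 1/A` and every history `x` with `μ(x) > 0` and `ξ(x) > 0`,
`l_{tΛξ}(x) ≤ (A+1) l_{tΛμ}(x) + (B+1) h_t(x)`. -/
theorem pointwise_loss_bound {ι : Type*} [Countable ι]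
    (μs : ι → List Bool → ℝ) (w : ι → ℝ)
    (hμs : ∀ i, IsDistr (μs i)) (hw : ∀ i, 0 < w i) (hw1 : HasSum w 1)
    (ξ : List Bool → ℝ) (hξ : ∀ x, HasSum (fun i => w i * μs i x) (ξ x))
    (i₀ : ι)
    (l : Bool → Bool → ℝ) (hl : ∀ a y, l a y ∈ Set.Icc (0 : ℝ) 1)
    (Yμ Yξ : List Bool → Bool)
    (hYμ : IsPredictor (μs i₀) l Yμ) (hYξ : IsPredictor ξ l Yξ)
    (A B : ℝ) (hA : 0 < A) (hB : A / 4 + 1 / A ≤ B)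
    (x : List Bool) (hμx : 0 < μs i₀ x) (hξx : 0 < ξ x) :
    expLoss (μs i₀) l x (Yξ x) ≤
      (A + 1) * expLoss (μs i₀) l x (Yμ x) + (B + 1) * instEnt (μs i₀) ξ x :=
  pointwise_loss_bound_general (hμs i₀) (IsDistr.of_hasSum hμs (fun i => (hw i).le) hw1 hξ)
    (fun b hb => eq_zero_of_hasSum_mul_zero (fun i => (hμs i).1 _) hw (hb ▸ hξ (x ++ [b])) i₀)
    hμx hl (hYξ x (Yμ x)) hA hB
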